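/- Let T ≥ 1, let η_1 ≥ η_2 ≥ … ≥ η_T > 0 be a nonincreasing sequence of positive reals, and let a_1, …, a_T be arbitrary reals. Then | Σ_{t=1}^T a_t | ≤ (1/η_T) · max_{1 ≤ τ ≤ T} | Σ_{i=τ}^T η_i · a_i |. -/

import Mathlib

/-!
Abel summation over tails: a monotone weight `w = 1 / η` is its first value plus the increments
accumulated since, so the weighted sum `∑ a = ∑ w • (η • a)` is a combination of tail sums of
`η • a` with nonnegative coefficients, and these coefficients telescope to `w n = 1 / η n`.
-/

open Finset

theorem sum_Icc_smul_eq_smul_sum_add_sum_sub_smul_tail {R V : Type*} [Ring R] [AddCommGroup V]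
    [Module R V] (m n : ℕ) (w : ℕ → R) (b : ℕ → V) :
    ∑ i ∈ Icc m n, w i • b i =
      w m • ∑ i ∈ Icc m n, b i +
        ∑ k ∈ Ico m n, (w (k + 1) - w k) • ∑ i ∈ Icc (k + 1) n, b i := by
  have swap : ∑ k ∈ Ico m n, ∑ i ∈ Icc (k + 1) n, (w (k + 1) - w k) • b i =
      ∑ i ∈ Icc m n, ∑ k ∈ Ico m i, (w (k + 1) - w k) • b i :=
    sum_comm' fun k i => by simp only [mem_Ico, mem_Icc]; omega
  simp only [smul_sum]
  rw [swap, ← sum_add_distrib]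
  refine sum_congr rfl fun i hi => ?_
  rw [← sum_smul, sum_Ico_sub w (mem_Icc.mp hi).1, ← add_smul, add_sub_cancel]

section NormedSpace

variable {E : Type*} [SeminormedAddCommGroup E] [NormedSpace ℝ E] {m n : ℕ}

theorem norm_sum_Icc_smul_le_of_monotoneOn (hmn : m ≤ n) {w : ℕ → ℝ} {b : ℕ → E} {M : ℝ}
    (hw : 0 ≤ w m) (hmono : MonotoneOn w (Set.Icc m n))
    (hM : ∀ τ ∈ Icc m n, ‖∑ i ∈ Icc τ n, b i‖ ≤ M) :
    ‖∑ i ∈ Icc m n, w i • b i‖ ≤ w n * M := by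
  have norm_smul_tail_le {c : ℝ} (hc : 0 ≤ c) {τ : ℕ} (hτ : τ ∈ Icc m n) :
      ‖c • ∑ i ∈ Icc τ n, b i‖ ≤ c * M := by
    rw [norm_smul_of_nonneg hc]
    exact mul_le_mul_of_nonneg_left (hM τ hτ) hc
  have increment_nonneg {k : ℕ} (hk : k ∈ Ico m n) : 0 ≤ w (k + 1) - w k := by
    obtain ⟨hmk, hkn⟩ := mem_Ico.mp hk
    exact sub_nonneg.mpr (hmono ⟨hmk, hkn.le⟩ ⟨by omega, hkn⟩ k.le_succ)
  rw [sum_Icc_smul_eq_smul_sum_add_sum_sub_smul_tail]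
  calc ‖w m • ∑ i ∈ Icc m n, b i +
        ∑ k ∈ Ico m n, (w (k + 1) - w k) • ∑ i ∈ Icc (k + 1) n, b i‖
      ≤ w m * M + ∑ k ∈ Ico m n, (w (k + 1) - w k) * M :=
        norm_add_le_of_le (norm_smul_tail_le hw (left_mem_Icc.mpr hmn))
          (norm_sum_le_of_le _ fun k hk => norm_smul_tail_le (increment_nonneg hk)
            (by simp only [mem_Ico, mem_Icc] at hk ⊢; omega))
    _ = w n * M := by rw [← sum_mul, sum_Ico_sub w hmn]; ring

theorem abel_summation_inequality_general (hmn : m ≤ n) {η : ℕ → ℝ} (a : ℕ → E)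
    (hpos : 0 < η n) (hanti : AntitoneOn η (Set.Icc m n)) :
    ‖∑ t ∈ Icc m n, a t‖ ≤
      (1 / η n) *
        (Icc m n).sup' (nonempty_Icc.mpr hmn) (fun τ => ‖∑ i ∈ Icc τ n, η i • a i‖) := by
  have η_pos {t : ℕ} (ht : t ∈ Set.Icc m n) : 0 < η t :=
    hpos.trans_le (hanti ht (Set.right_mem_Icc.mpr hmn) ht.2)
  have inv_mono : MonotoneOn (fun t => 1 / η t) (Set.Icc m n) := fun s hs t ht hst =>
    one_div_le_one_div_of_le (η_pos ht) (hanti hs ht hst)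
  have sum_eq : ∑ t ∈ Icc m n, a t = ∑ t ∈ Icc m n, (1 / η t) • η t • a t :=
    sum_congr rfl fun t ht => by
      rw [one_div, inv_smul_smul₀ (η_pos (mem_Icc.mp ht)).ne']
  rw [sum_eq]
  exact norm_sum_Icc_smul_le_of_monotoneOn hmn
    (one_div_pos.mpr (η_pos (Set.left_mem_Icc.mpr hmn))).le inv_mono
    fun τ hτ => le_sup' (fun τ => ‖∑ i ∈ Icc τ n, η i • a i‖) hτ

end NormedSpace

/-- Abel-summation inequality: for a nonincreasing positive sequence `η` and arbitrary reals
`a`, `|Σ_{t=1}^T a t| ≤ (1/η_T) max_{1 ≤ τ ≤ T} |Σ_{i=τ}^T η i * a i|`. -/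
theorem abel_summation_inequality
    (T : ℕ) (hT : 1 ≤ T) (η a : ℕ → ℝ)
    (hηpos : ∀ t ∈ Finset.Icc 1 T, 0 < η t)
    (hηdec : ∀ s t, 1 ≤ s → s ≤ t → t ≤ T → η t ≤ η s) :
    |∑ t ∈ Finset.Icc 1 T, a t| ≤
      (1 / η T) *
        (Finset.Icc 1 T).sup' (Finset.nonempty_Icc.mpr hT)
          (fun τ => |∑ i ∈ Finset.Icc τ T, η i * a i|) :=
  abel_summation_inequality_general hT a (hηpos T (right_mem_Icc.mpr hT))
    fun s hs t ht hst => hηdec s t hs.1 hst ht.2
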